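/- Let q be a prime power, let F_q ⊆ F_{q^m} be finite fields, and let c ≤ s < q be positive integers. For a basis 𝔞 = (a_1,...,a_m) of F_{q^m} over F_q, let γ_𝔞(T) = (γ_1(T),...,γ_m(T)) with γ_k(T) = Σ_{i=0}^{m−1} a_k^{q^i}·T^{q^i} ∈ F_{q^m}[T]. Let 𝔞_1,...,𝔞_M ∈ F_{q^m}^m be bases of F_{q^m} over F_q in (s,c)-general position, meaning there is no nonzero polynomial R ∈ F_{q^m}[X_1,...,X_m] of total degree at most s which vanishes at every 𝔞_i with multiplicity at least c. Let Q ∈ F_{q^m}[X_1,...,X_m] have total degree < s·q, and suppose that for each i ∈ {1,...,M} and each vector l of nonnegative integers with wt(l) < c, the univariate polynomial Q^{(l)}(γ_{𝔞_i}(T)) ∈ F_{q^m}[T] is identically zero. Then Q = 0. -/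

import Mathlib

/-- The Hasse derivative of a multivariate polynomial `P` with respect to the index
vector `i : Fin m → ℕ`: the coefficient of `Z^i` in `P(X + Z)`. -/
noncomputable def mvHasseDeriv {F : Type*} [CommSemiring F] {m : ℕ}
    (i : Fin m → ℕ) (P : MvPolynomial (Fin m) F) : MvPolynomial (Fin m) F :=
  MvPolynomial.coeff (Finsupp.equivFunOnFinite.symm i)
    (MvPolynomial.eval₂ (MvPolynomial.C.comp MvPolynomial.C)
      (fun k => MvPolynomial.C (MvPolynomial.X k) + MvPolynomial.X k) P)

/-- The multiplicity of `P` at a point `a`: the largest `M` (possibly `⊤`) such that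
all Hasse derivatives of `P` of weight `< M` vanish at `a`. -/
noncomputable def mvMult {F : Type*} [CommSemiring F] {m : ℕ}
    (P : MvPolynomial (Fin m) F) (a : Fin m → F) : ℕ∞ :=
  sSup {M : ℕ∞ | ∀ i : Fin m → ℕ, ((∑ k, i k : ℕ) : ℕ∞) < M →
    MvPolynomial.eval a (mvHasseDeriv i P) = 0}

/-!
Fix a point `x` of the grid `F^m`. Since the trace form is nondegenerate, every curve `γ_𝔞` passes
through `x`, say at `T = t`, and additivity of Frobenius gives `γ_𝔞(T + t) = γ_𝔞(T) + x`. Hence the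
Hasse derivatives of `Q(X + x)` of weight `< c` also vanish identically on `γ_𝔞`. Modulo `T^q` the
curve `γ_𝔞(T)` is the line `𝔞 T`, so comparing coefficients of `T^j` for `j < q` shows that each
homogeneous component of `Q(X + x)` of degree `< s` vanishes at all the `𝔞_i` with multiplicity at
least `c`; by general position it is zero. Thus `Q` vanishes to order `s` at every point of `F^m`,
and a polynomial of degree `< s * q` with this property is zero, by the Schwartz–Zippel lemma with
multiplicities.
-/

section Translation

open MvPolynomial

variable {R S σ : Type*} [CommSemiring R] [CommSemiring S] [Algebra R S]

/-- The translation operator `P(X) ↦ P(X + x)`, the multivariate counterpart of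
`Polynomial.taylorAlgHom`. -/
noncomputable def mvTranslate (x : σ → R) : MvPolynomial σ R →ₐ[R] MvPolynomial σ R :=
  aeval fun k => X k + C (x k)

theorem aeval_mvTranslate (f : σ → S) (x : σ → R) (P : MvPolynomial σ R) :
    aeval f (mvTranslate x P) = aeval (fun k => f k + algebraMap R S (x k)) P := by
  rw [mvTranslate, comp_aeval_apply]
  simp only [map_add, aeval_X, algHom_C]

theorem mvTranslate_of_isEmpty [IsEmpty σ] (x : σ → R) (P : MvPolynomial σ R) :
    mvTranslate x P = P := by
  rw [eq_C_of_isEmpty P, ← algebraMap_eq, AlgHom.commutes]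

theorem finSuccEquiv_mvTranslate {n : ℕ} (a : Fin n → R) (b : R)
    (P : MvPolynomial (Fin (n + 1)) R) :
    finSuccEquiv R n (mvTranslate (Fin.cons b a : Fin (n + 1) → R) P) =
      ((finSuccEquiv R n P).map (mvTranslate a).toRingHom).taylor (C b) := by
  suffices h : (finSuccEquiv R n).toAlgHom.comp (mvTranslate (Fin.cons b a : Fin (n + 1) → R)) =
      (((Polynomial.taylorAlgHom (C b)).restrictScalars R).comp
        (Polynomial.mapAlgHom (mvTranslate a))).comp (finSuccEquiv R n).toAlgHom from
    DFunLike.congr_fun h P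
  ext k : 1
  cases k using Fin.cases with
  | zero => simp [mvTranslate, finSuccEquiv_apply]
  | succ k => simp [mvTranslate, finSuccEquiv_apply]

end Translation

section PolynomialSwap

open MvPolynomial

variable {R σ : Type*} [CommSemiring R]

/-- The ring homomorphism `R[X_σ][Y] → R[Y][X_σ]` exchanging the order of the variables. It makes
a coefficient with respect to `X_σ` available as a univariate polynomial in `Y`. -/
noncomputable def polynomialSwap :
    Polynomial (MvPolynomial σ R) →+* MvPolynomial σ (Polynomial R) :=
  Polynomial.eval₂RingHom (map Polynomial.C) (C Polynomial.X)

theorem coeff_coeff_polynomialSwap (P : Polynomial (MvPolynomial σ R)) (i : σ →₀ ℕ) (j : ℕ) :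
    (coeff i (polynomialSwap P)).coeff j = coeff i (P.coeff j) := by
  induction P using Polynomial.induction_on' with
  | add P Q hP hQ => simp only [map_add, coeff_add, Polynomial.coeff_add, hP, hQ]
  | monomial n c =>
    rw [polynomialSwap, Polynomial.coe_eval₂RingHom, Polynomial.eval₂_monomial, ← map_pow,
      mul_comm, coeff_C_mul, coeff_map, mul_comm, Polynomial.coeff_C_mul_X_pow,
      Polynomial.coeff_monomial]
    split_ifs <;> simp_all

theorem polynomialSwap_taylor (b : R) (P : Polynomial (MvPolynomial σ R)) :
    polynomialSwap (P.taylor (C b)) =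
      map (Polynomial.taylorAlgHom b).toRingHom (polynomialSwap P) := by
  suffices h : polynomialSwap.comp (Polynomial.taylorAlgHom (C b : MvPolynomial σ R)).toRingHom =
      (map (Polynomial.taylorAlgHom b).toRingHom).comp polynomialSwap from
    DFunLike.congr_fun h P
  ext <;> simp [polynomialSwap]

theorem coeff_coeff_taylor_C (b : R) (P : Polynomial (MvPolynomial σ R)) (i : σ →₀ ℕ) (j : ℕ) :
    coeff i ((P.taylor (C b)).coeff j) = ((coeff i (polynomialSwap P)).taylor b).coeff j := by
  rw [← coeff_coeff_polynomialSwap, polynomialSwap_taylor, coeff_map]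
  rfl

theorem natDegree_coeff_polynomialSwap_le (P : Polynomial (MvPolynomial σ R)) (i : σ →₀ ℕ) :
    (coeff i (polynomialSwap P)).natDegree ≤ P.natDegree := by
  refine Polynomial.natDegree_le_iff_coeff_eq_zero.2 fun j hj => ?_
  rw [coeff_coeff_polynomialSwap, Polynomial.coeff_eq_zero_of_natDegree_lt hj, coeff_zero]

end PolynomialSwap

section GridVanishing

open MvPolynomial

variable {R : Type*} [CommRing R] [IsDomain R]

theorem eq_zero_of_coeff_taylor_eq_zero (S : Finset R) (r : ℕ) (P : Polynomial R)
    (hdeg : P.natDegree < r * S.card)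
    (hvan : ∀ b ∈ S, ∀ j < r, (P.taylor b).coeff j = 0) : P = 0 := by
  classical
  by_contra hP
  have hroot (b) (hb : b ∈ S) : r ≤ P.roots.count b := by
    rw [Polynomial.count_roots, Polynomial.le_rootMultiplicity_iff hP,
      Polynomial.X_sub_C_pow_dvd_iff, Polynomial.X_pow_dvd_iff]
    exact hvan b hb
  have hroots : r • S.val ≤ P.roots := by
    refine Multiset.le_iff_count.2 fun b => ?_
    rw [Multiset.count_nsmul, Multiset.count_eq_of_nodup S.nodup]
    split_ifs with hb
    · simpa using hroot b hb
    · simp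
  refine hdeg.not_ge ?_
  calc r * S.card = (r • S.val).card := by rw [Multiset.card_nsmul, Finset.card_val]
    _ ≤ P.roots.card := Multiset.card_le_card hroots
    _ ≤ P.natDegree := P.card_roots'

theorem coeff_mvTranslate_coeff_finSuccEquiv_eq_zero {n : ℕ} (S : Finset R) (s : ℕ)
    (Q : MvPolynomial (Fin (n + 1)) R)
    (hvan : ∀ x : Fin (n + 1) → R, (∀ k, x k ∈ S) →
      ∀ e : Fin (n + 1) →₀ ℕ, e.degree < s → coeff e (mvTranslate x Q) = 0)
    (a : Fin n → R) (ha : ∀ k, a k ∈ S) (i : Fin n →₀ ℕ)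
    (hdeg : (finSuccEquiv R n Q).natDegree < (s - i.degree) * S.card) (j : ℕ) :
    coeff i (mvTranslate a ((finSuccEquiv R n Q).coeff j)) = 0 := by
  set P := (finSuccEquiv R n Q).map (mvTranslate a).toRingHom with hP
  -- The Taylor coefficients at `b ∈ S` of this univariate slice are coefficients of
  -- `Q(X + (b, a))`, so the slice has `S.card` roots of multiplicity `s - i.degree`.
  have hslice : coeff i (polynomialSwap P) = 0 := by
    refine eq_zero_of_coeff_taylor_eq_zero S (s - i.degree) _ ?_ fun b hb r hr => ?_
    · calc (coeff i (polynomialSwap P)).natDegree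
          ≤ P.natDegree := natDegree_coeff_polynomialSwap_le P i
        _ ≤ (finSuccEquiv R n Q).natDegree := Polynomial.natDegree_map_le
        _ < (s - i.degree) * S.card := hdeg
    · rw [← coeff_coeff_taylor_C, ← finSuccEquiv_mvTranslate, finSuccEquiv_coeff_coeff]
      refine hvan _ (Fin.cases hb ha) _ ?_
      rw [Finsupp.degree_eq_sum] at hr ⊢
      simp only [Fin.sum_univ_succ, Finsupp.cons_zero, Finsupp.cons_succ]
      lia
  calc coeff i (mvTranslate a ((finSuccEquiv R n Q).coeff j))
      = coeff i (P.coeff j) := by rw [hP, Polynomial.coeff_map]; rfl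
    _ = (coeff i (polynomialSwap P)).coeff j := (coeff_coeff_polynomialSwap P i j).symm
    _ = 0 := by rw [hslice, Polynomial.coeff_zero]

theorem eq_zero_of_coeff_mvTranslate_eq_zero {m : ℕ} (S : Finset R) (s : ℕ)
    (Q : MvPolynomial (Fin m) R) (hdeg : Q.totalDegree < s * S.card)
    (hvan : ∀ x : Fin m → R, (∀ k, x k ∈ S) →
      ∀ e : Fin m →₀ ℕ, e.degree < s → coeff e (mvTranslate x Q) = 0) : Q = 0 := by
  have hS : 0 < S.card := Nat.pos_of_mul_pos_left (Nat.zero_lt_of_lt hdeg)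
  induction m generalizing s with
  | zero =>
    have hs : 0 < s := Nat.pos_of_mul_pos_right (Nat.zero_lt_of_lt hdeg)
    have hconst := hvan Fin.elim0 (fun k => k.elim0) 0 (by simpa using hs)
    rw [mvTranslate_of_isEmpty] at hconst
    rw [eq_C_of_isEmpty Q, hconst, C_0]
  | succ n ih =>
    set t := (finSuccEquiv R n Q).natDegree with ht
    by_contra hQ
    have hlead : (finSuccEquiv R n Q).coeff t ≠ 0 := by
      simpa [ht] using hQ
    have hlead_deg : ((finSuccEquiv R n Q).coeff t).totalDegree + t ≤ Q.totalDegree :=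
      totalDegree_coeff_finSuccEquiv_add_le Q t hlead
    have hlead_lt : ((finSuccEquiv R n Q).coeff t).totalDegree < (s - t / S.card) * S.card := by
      have := Nat.div_mul_le_self t S.card
      rw [Nat.sub_mul]
      lia
    refine hlead (ih (s - t / S.card) _ hlead_lt fun a ha i hi => ?_)
    refine coeff_mvTranslate_coeff_finSuccEquiv_eq_zero S s Q hvan a ha i ?_ t
    rw [← Nat.div_lt_iff_lt_mul hS]
    lia

end GridVanishing

section HasseDerivative

open MvPolynomial

variable {R σ τ : Type*} [CommSemiring R] {m : ℕ}

/-- The Taylor expansion `P(X) ↦ P(X + Z)`, as a polynomial in `Z` with coefficients in `R[X]`;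
its coefficients are the Hasse derivatives of `P`. -/
noncomputable def mvTaylor : MvPolynomial σ R →ₐ[R] MvPolynomial σ (MvPolynomial σ R) :=
  aeval fun k => C (X k) + X k

theorem mvHasseDeriv_eq_coeff_mvTaylor (l : Fin m → ℕ) (P : MvPolynomial (Fin m) R) :
    mvHasseDeriv l P = coeff (Finsupp.equivFunOnFinite.symm l) (mvTaylor P) :=
  rfl

theorem mvTaylor_mvTranslate (x : σ → R) (P : MvPolynomial σ R) :
    mvTaylor (mvTranslate x P) = map (mvTranslate x).toRingHom (mvTaylor P) := by
  suffices h : mvTaylor.comp (mvTranslate x) =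
      (mapAlgHom (mvTranslate x)).comp mvTaylor from DFunLike.congr_fun h P
  ext k : 1
  simp [mvTaylor, mvTranslate, mapAlgHom_apply, add_right_comm]

theorem mvHasseDeriv_mvTranslate (l : Fin m → ℕ) (x : Fin m → R) (P : MvPolynomial (Fin m) R) :
    mvHasseDeriv l (mvTranslate x P) = mvTranslate x (mvHasseDeriv l P) := by
  rw [mvHasseDeriv_eq_coeff_mvTaylor, mvTaylor_mvTranslate, coeff_map]
  rfl

theorem coeff_coeff_sumAlgEquiv (P : MvPolynomial (σ ⊕ τ) R) (l : σ →₀ ℕ) (e : τ →₀ ℕ) :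
    coeff e (coeff l (sumAlgEquiv R σ τ P)) = coeff (l.sumElim e) P := by
  simp [coeff]

theorem mvTaylor_eq_sumAlgEquiv (P : MvPolynomial σ R) :
    mvTaylor P = sumAlgEquiv R σ σ (aeval (fun k => X (.inr k) + X (.inl k)) P) := by
  suffices h : (mvTaylor : MvPolynomial σ R →ₐ[R] _) =
      (sumAlgEquiv R σ σ).toAlgHom.comp (aeval fun k => X (.inr k) + X (.inl k)) from
    DFunLike.congr_fun h P
  ext k : 1
  simp [mvTaylor]

theorem coeff_coeff_mvTaylor_eq_zero {P : MvPolynomial σ R} {n : ℕ} (hP : P.IsHomogeneous n)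
    {l e : σ →₀ ℕ} (hn : e.degree + l.degree ≠ n) : coeff e (coeff l (mvTaylor P)) = 0 := by
  -- In the joint variables `X` and `Z`, the polynomial `P(X + Z)` is again homogeneous.
  have hsum : (aeval (fun k => X (.inr k) + X (.inl k)) P :
      MvPolynomial (σ ⊕ σ) R).IsHomogeneous n := by
    simpa using hP.aeval (n := 1) _ fun k => (isHomogeneous_X R _).add (isHomogeneous_X R _)
  rw [mvTaylor_eq_sumAlgEquiv, coeff_coeff_sumAlgEquiv]
  refine hsum.coeff_eq_zero ?_
  rwa [Finsupp.sumElim_eq_add, map_add, Finsupp.degree_mapDomain, Finsupp.degree_mapDomain,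
    add_comm]

theorem coeff_coeff_mvTaylor_homogeneousComponent (P : MvPolynomial σ R) (d : ℕ)
    (l e : σ →₀ ℕ) :
    coeff e (coeff l (mvTaylor (homogeneousComponent d P))) =
      if e.degree + l.degree = d then coeff e (coeff l (mvTaylor P)) else 0 := by
  split_ifs with hd
  · induction P using MvPolynomial.induction_on' with
    | monomial n r =>
      have hmon : (monomial n r).IsHomogeneous n.degree := isHomogeneous_monomial r rfl
      rw [homogeneousComponent_of_mem hmon]
      split_ifs with hn
      · rfl
      · rw [coeff_coeff_mvTaylor_eq_zero hmon (by lia), map_zero, coeff_zero, coeff_zero]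
    | add P Q hP hQ => simp only [map_add, coeff_add, hP, hQ]
  · exact coeff_coeff_mvTaylor_eq_zero (homogeneousComponent_isHomogeneous d P) hd

theorem mvHasseDeriv_homogeneousComponent (l : Fin m → ℕ) (d : ℕ)
    (P : MvPolynomial (Fin m) R) :
    mvHasseDeriv l (homogeneousComponent d P) =
      if ∑ k, l k ≤ d then homogeneousComponent (d - ∑ k, l k) (mvHasseDeriv l P) else 0 := by
  have hl : (Finsupp.equivFunOnFinite.symm l).degree = ∑ k, l k := Finsupp.degree_eq_sum _
  ext e
  rw [mvHasseDeriv_eq_coeff_mvTaylor, coeff_coeff_mvTaylor_homogeneousComponent, hl]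
  split_ifs with hd hle hle
  · rw [coeff_homogeneousComponent, if_pos (by lia), mvHasseDeriv_eq_coeff_mvTaylor]
  · lia
  · rw [coeff_homogeneousComponent, if_neg (by lia)]
  · rw [coeff_zero]

theorem le_mvMult {P : MvPolynomial (Fin m) R} {a : Fin m → R} {c : ℕ}
    (h : ∀ l : Fin m → ℕ, ∑ k, l k < c → eval a (mvHasseDeriv l P) = 0) :
    (c : ℕ∞) ≤ mvMult P a :=
  le_sSup fun l hl => h l (by exact_mod_cast hl)

end HasseDerivative

section TraceCurve

open Polynomial

/-- The coordinate polynomial `γ_a(T) = ∑_{e<n} a^{q^e} T^{q^e}` of a trace curve. For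
`n = [K : F]` and `q = #F` its value at `t` is the trace of `a * t`. -/
noncomputable def tracePoly {R : Type*} [CommSemiring R] (q n : ℕ) (a : R) : R[X] :=
  ∑ e ∈ Finset.range n, C (a ^ q ^ e) * X ^ q ^ e

theorem add_pow_card_pow (F : Type*) {R : Type*} [Field F] [Fintype F] [CommRing R] [Algebra F R]
    (x y : R) (e : ℕ) :
    (x + y) ^ Fintype.card F ^ e = x ^ Fintype.card F ^ e + y ^ Fintype.card F ^ e := by
  simpa [AlgHom.coe_pow, FiniteField.coe_frobeniusAlgHom, pow_iterate] using
    map_add (FiniteField.frobeniusAlgHom F R ^ e) x y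

theorem taylor_tracePoly (F : Type*) {R : Type*} [Field F] [Fintype F] [CommRing R] [Algebra F R]
    (n : ℕ) (a t : R) :
    (tracePoly (Fintype.card F) n a).taylor t =
      tracePoly (Fintype.card F) n a + C ((tracePoly (Fintype.card F) n a).eval t) := by
  simp only [tracePoly, map_sum, eval_finsetSum, ← Finset.sum_add_distrib]
  refine Finset.sum_congr rfl fun e _ => ?_
  rw [taylor_mul, taylor_C, taylor_X_pow, add_pow_card_pow F, mul_add]
  simp

theorem aeval_tracePoly_mvTranslate (F : Type*) {R σ : Type*} [Field F] [Fintype F] [CommRing R]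
    [Algebra F R] (n : ℕ) (a : σ → R) (t : R) (P : MvPolynomial σ R) :
    MvPolynomial.aeval (fun k => tracePoly (Fintype.card F) n (a k))
        (mvTranslate (fun k => (tracePoly (Fintype.card F) n (a k)).eval t) P) =
      (MvPolynomial.aeval (fun k => tracePoly (Fintype.card F) n (a k)) P).taylor t := by
  simp only [aeval_mvTranslate, algebraMap_eq, ← taylor_tracePoly F]
  exact (MvPolynomial.comp_aeval_apply _ (taylorAlgHom t) P).symm

theorem X_pow_dvd_tracePoly_sub {R : Type*} [CommRing R] (q : ℕ) {n : ℕ} (hn : 0 < n) (a : R) :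
    X ^ q ∣ tracePoly q n a - C a * X := by
  obtain ⟨n, rfl⟩ := Nat.exists_eq_succ_of_ne_zero hn.ne'
  rw [tracePoly, Finset.sum_range_succ', pow_zero, pow_one, pow_one, add_sub_cancel_right]
  exact Finset.dvd_sum fun e _ => (pow_dvd_pow X (Nat.le_self_pow e.succ_ne_zero q)).mul_left _

theorem dvd_aeval_sub_aeval {R S σ : Type*} [CommRing R] [CommRing S] [Algebra R S] {d : S}
    {f g : σ → S} (h : ∀ k, d ∣ f k - g k) (P : MvPolynomial σ R) :
    d ∣ MvPolynomial.aeval f P - MvPolynomial.aeval g P := by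
  simp_rw [← Ideal.mem_span_singleton, ← Ideal.Quotient.mk_eq_mk_iff_sub_mem,
    ← Ideal.Quotient.mkₐ_eq_mk R] at h ⊢
  simp_rw [MvPolynomial.comp_aeval_apply, h]

theorem coeff_aeval_C_mul_X {R σ : Type*} [CommSemiring R] (a : σ → R) (P : MvPolynomial σ R)
    (j : ℕ) :
    (MvPolynomial.aeval (fun k => C (a k) * X) P).coeff j =
      MvPolynomial.eval a (MvPolynomial.homogeneousComponent j P) := by
  induction P using MvPolynomial.induction_on' with
  | monomial n r =>
    have hline : MvPolynomial.aeval (fun k => C (a k) * X) (MvPolynomial.monomial n r) =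
        C (MvPolynomial.eval a (MvPolynomial.monomial n r)) * X ^ n.degree := by
      simp only [MvPolynomial.aeval_monomial, MvPolynomial.eval_monomial, Finsupp.prod, mul_pow,
        Finset.prod_mul_distrib, Finset.prod_pow_eq_pow_sum, Finsupp.degree_apply, map_mul,
        map_prod, map_pow, algebraMap_eq, mul_assoc]
    rw [hline, coeff_C_mul_X_pow, MvPolynomial.homogeneousComponent_of_mem
      (MvPolynomial.isHomogeneous_monomial r rfl), apply_ite (MvPolynomial.eval a), map_zero]
  | add P Q hP hQ => simp only [map_add, coeff_add, hP, hQ]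

theorem eval_homogeneousComponent_eq_zero {R σ : Type*} [CommRing R] {q n j : ℕ} (hn : 0 < n)
    (hj : j < q) {a : σ → R} {P : MvPolynomial σ R}
    (hP : MvPolynomial.aeval (fun k => tracePoly q n (a k)) P = 0) :
    MvPolynomial.eval a (MvPolynomial.homogeneousComponent j P) = 0 := by
  have hdvd := dvd_aeval_sub_aeval (fun k => X_pow_dvd_tracePoly_sub q hn (a k)) P
  rw [hP, zero_sub, dvd_neg, X_pow_dvd_iff] at hdvd
  rw [← coeff_aeval_C_mul_X, hdvd j hj]

theorem le_mvMult_homogeneousComponent {R : Type*} [CommRing R] {m q n c d : ℕ} (hn : 0 < n)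
    (hd : d < q) {a : Fin m → R} {P : MvPolynomial (Fin m) R}
    (hP : ∀ l : Fin m → ℕ, ∑ k, l k < c →
      MvPolynomial.aeval (fun k => tracePoly q n (a k)) (mvHasseDeriv l P) = 0) :
    (c : ℕ∞) ≤ mvMult (MvPolynomial.homogeneousComponent d P) a := by
  refine le_mvMult fun l hl => ?_
  rw [mvHasseDeriv_homogeneousComponent]
  split_ifs
  · exact eval_homogeneousComponent_eq_zero hn ((Nat.sub_le _ _).trans_lt hd) (hP l hl)
  · exact map_zero _

theorem eval_tracePoly_eq_algebraMap_trace {F K : Type*} [Field F] [Fintype F] [Field K]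
    [Finite K] [Algebra F K] (a t : K) :
    (tracePoly (Fintype.card F) (Module.finrank F K) a).eval t =
      algebraMap F K (Algebra.trace F K (a * t)) := by
  rw [FiniteField.algebraMap_trace_eq_sum_pow, Nat.card_eq_fintype_card]
  simp [tracePoly, eval_finsetSum, mul_pow]

theorem exists_trace_mul_eq {F K ι : Type*} [Field F] [Field K] [Algebra F K]
    [Algebra.IsSeparable F K] [Finite ι] (b : Module.Basis ι F K) (y : ι → F) :
    ∃ t : K, ∀ k, Algebra.trace F K (b k * t) = y k := by
  classical
  cases nonempty_fintype ι
  have : FiniteDimensional F K := .of_basis b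
  let b' := (Algebra.traceForm F K).dualBasis (traceForm_nondegenerate F K) b
  refine ⟨b'.equivFun.symm y, fun k => ?_⟩
  calc Algebra.trace F K (b k * b'.equivFun.symm y)
      = Algebra.traceForm F K (b'.equivFun.symm y) (b k) := by
        rw [Algebra.traceForm_apply, mul_comm]
    _ = b'.repr (b'.equivFun.symm y) k :=
        (LinearMap.BilinForm.dualBasis_repr_apply _ b _ k).symm
    _ = y k := congrFun (b'.equivFun.apply_symm_apply y) k

theorem exists_eval_tracePoly_eq {F K : Type*} [Field F] [Fintype F] [Field K] [Algebra F K]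
    {m : ℕ} (b : Module.Basis (Fin m) F K) (y : Fin m → F) :
    ∃ t : K, ∀ k, (tracePoly (Fintype.card F) m (b k)).eval t = algebraMap F K (y k) := by
  have : Module.Finite F K := .of_basis b
  have : Finite K := Module.finite_of_finite F
  have hm : Module.finrank F K = m := by
    rw [Module.finrank_eq_card_basis b, Fintype.card_fin]
  obtain ⟨t, ht⟩ := exists_trace_mul_eq b y
  exact ⟨t, fun k => by rw [← ht, ← eval_tracePoly_eq_algebraMap_trace, hm]⟩

end TraceCurve

theorem repelling_trace_curves_general {F K ι : Type*} [Field F] [Fintype F] [Field K]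
    [Algebra F K] {m : ℕ} (c s : ℕ) (hsq : s ≤ Fintype.card F)
    (A : ι → Module.Basis (Fin m) F K)
    (hgen : ∀ d < s, ∀ R : MvPolynomial (Fin m) K, R.IsHomogeneous d →
      (∀ i, (c : ℕ∞) ≤ mvMult R (A i)) → R = 0)
    (Q : MvPolynomial (Fin m) K) (hdeg : Q.totalDegree < s * Fintype.card F)
    (hvan : ∀ i, ∀ l : Fin m → ℕ, ∑ k, l k < c →
      MvPolynomial.aeval (fun k => tracePoly (Fintype.card F) m (A i k)) (mvHasseDeriv l Q) = 0) :
    Q = 0 := by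
  let S : Finset K := Finset.univ.map ⟨algebraMap F K, (algebraMap F K).injective⟩
  refine eq_zero_of_coeff_mvTranslate_eq_zero S s Q (by simpa [S] using hdeg) fun x hx e he => ?_
  have hx' (k : Fin m) : ∃ y, algebraMap F K y = x k := by simpa [S] using hx k
  choose y hy using hx'
  have hcomp : MvPolynomial.homogeneousComponent e.degree (mvTranslate x Q) = 0 := by
    refine hgen _ he _ (MvPolynomial.homogeneousComponent_isHomogeneous _ _) fun i => ?_
    have hm : 0 < m := Fin.pos_iff_nonempty.2 (A i).index_nonempty
    obtain ⟨t, ht⟩ := exists_eval_tracePoly_eq (A i) y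
    obtain rfl : (fun k => (tracePoly (Fintype.card F) m (A i k)).eval t) = x :=
      funext fun k => (ht k).trans (hy k)
    refine le_mvMult_homogeneousComponent hm (he.trans_le hsq) fun l hl => ?_
    rw [mvHasseDeriv_mvTranslate, aeval_tracePoly_mvTranslate, hvan i l hl, map_zero]
  calc MvPolynomial.coeff e (mvTranslate x Q)
      = (MvPolynomial.homogeneousComponent e.degree (mvTranslate x Q)).coeff e := by
        rw [MvPolynomial.coeff_homogeneousComponent, if_pos rfl]
    _ = 0 := by rw [hcomp, MvPolynomial.coeff_zero]

/-- **Algebraically repelling trace curves.**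
Let `F = F_q ⊆ K = F_{q^m}`, `c ≤ s < q`. Let `𝔞_1, …, 𝔞_M ∈ K^m` be bases of `K` over `F` in
`(s,c)`-general position: no nonzero `R ∈ K[X_1,…,X_m]` of total degree at most `s` vanishes
at every `𝔞_i` with multiplicity at least `c`. If `Q ∈ K[X_1,…,X_m]` has total degree `< s·q`
and `Q^{(l)} ∘ γ_{𝔞_i} = 0` for every `i` and every `l` with `wt(l) < c`, where
`γ_{𝔞}(T) = (∑_{e<m} a_k^{q^e} T^{q^e})_k`, then `Q = 0`. -/
theorem repelling_trace_curves {F K : Type*} [Field F] [Fintype F]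
    [Field K] [Fintype K] [Algebra F K] {m M : ℕ} (c s : ℕ)
    (hc : 0 < c) (hcs : c ≤ s) (hsq : s < Fintype.card F)
    (A : Fin M → Fin m → K)
    (hA : ∀ i, LinearIndependent F (A i) ∧ Submodule.span F (Set.range (A i)) = ⊤)
    (hgen : ¬ ∃ R : MvPolynomial (Fin m) K, R ≠ 0 ∧ R.totalDegree ≤ s ∧
      ∀ i, (c : ℕ∞) ≤ mvMult R (A i))
    (Q : MvPolynomial (Fin m) K) (hdeg : Q.totalDegree < s * Fintype.card F)
    (hvan : ∀ i : Fin M, ∀ l : Fin m → ℕ, ∑ k, l k < c →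
      MvPolynomial.aeval
        (fun k => ∑ e ∈ Finset.range m,
          Polynomial.C (A i k ^ Fintype.card F ^ e) * Polynomial.X ^ Fintype.card F ^ e)
        (mvHasseDeriv l Q) = (0 : Polynomial K)) :
    Q = 0 := by
  refine repelling_trace_curves_general c s hsq.le
    (fun i => .mk (hA i).1 (hA i).2.ge) (fun d hd R hR hmult => ?_) Q hdeg fun i l hl => ?_
  · by_contra hne
    exact hgen ⟨R, hne, hR.totalDegree_le.trans hd.le, fun i => by simpa using hmult i⟩
  · simpa [tracePoly] using hvan i l hl
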